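/- Let n ≥ 8, let p be a prime, and let k ∈ ℕ satisfy p^k > 2^{2n}. Let F̃ be a finite field with p^{2k} elements, let F be its subfield with p^k elements, and let β ∈ F̃ \ F. Then there exists α = (α_1,…,α_n) ∈ F^n such that every polynomial f ∈ F̃[x_1,…,x_n] satisfying f(a)·(Σ_i α_i a_i − β) = 1 for all a ∈ {0,1}^n has sparsity at least 2^{n/4 − 1}. -/

import Mathlib

open Finset in
theorem aux_roots {K ι : Type*} [Field K] [DecidableEq ι] (I : Finset ι) (hI : I.Nonempty)
    (d c : ι → K) (hd : Set.InjOn d (I : Set ι)) (hc : ∀ j ∈ I, c j ≠ 0) (k : K) :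
    ∃ B : Finset K, B.card ≤ I.card ∧ ∀ t, t ∉ B → (∀ j ∈ I, t - d j ≠ 0) →
      ∑ j ∈ I, c j * (t - d j)⁻¹ ≠ k := by
  classical
  let Q : Polynomial K := ∑ j ∈ I, Polynomial.C (c j) *
      ∏ i ∈ I.erase j, (Polynomial.X - Polynomial.C (d i)) -
      Polynomial.C k * ∏ i ∈ I, (Polynomial.X - Polynomial.C (d i))
  have hev : ∀ t, Q.eval t = ∑ j ∈ I, c j * ∏ i ∈ I.erase j, (t - d i) -
      k * ∏ i ∈ I, (t - d i) := by
    intro t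
    simp [Q, Polynomial.eval_finsetSum, Polynomial.eval_prod]
  have hQ : Q ≠ 0 := by
    obtain ⟨j0, hj0⟩ := hI
    intro h0
    have h1 := hev (d j0)
    rw [h0, Polynomial.eval_zero, Finset.prod_eq_zero hj0 (sub_self _), mul_zero, sub_zero,
      Finset.sum_eq_single_of_mem j0 hj0] at h1
    · refine mul_ne_zero (hc j0 hj0) (Finset.prod_ne_zero_iff.mpr ?_) h1.symm
      intro i hi h
      rw [Finset.mem_erase] at hi
      exact hi.1 (hd hi.2 hj0 (sub_eq_zero.mp h).symm)
    · intro b hb hbj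
      rw [Finset.prod_eq_zero (Finset.mem_erase.mpr ⟨hbj.symm, hj0⟩) (sub_self _), mul_zero]
  have hprod : ∀ J : Finset ι,
      (∏ i ∈ J, (Polynomial.X - Polynomial.C (d i))).natDegree ≤ J.card := by
    intro J
    refine (Polynomial.natDegree_prod_le _ _).trans ?_
    simp
  have hdeg : Q.natDegree ≤ I.card := by
    refine (Polynomial.natDegree_sub_le _ _).trans (max_le ?_ ?_)
    · refine Polynomial.natDegree_sum_le_of_forall_le _ _ ?_
      intro j hj
      refine (Polynomial.natDegree_C_mul_le _ _).trans ((hprod _).trans ?_)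
      exact Finset.card_le_card (Finset.erase_subset _ _)
    · exact (Polynomial.natDegree_C_mul_le _ _).trans (hprod _)
  refine ⟨Q.roots.toFinset, (Multiset.toFinset_card_le _).trans ((Polynomial.card_roots' Q).trans hdeg), ?_⟩
  intro t ht hne heq
  apply ht
  rw [Multiset.mem_toFinset, Polynomial.mem_roots hQ, Polynomial.IsRoot, hev, ← heq,
    Finset.sum_mul, sub_eq_zero]
  refine Finset.sum_congr rfl fun j hj => ?_
  rw [← Finset.mul_prod_erase I _ hj]
  have := hne j hj
  field_simp

theorem aux_avoid {K : Type*} [Field K] [Fintype K] (F : Subfield K) (B : Finset K)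
    (h : B.card < Nat.card F) : ∃ t ∈ F, t ∉ B := by
  by_contra! hcon
  have : (F : Set K) ⊆ (B : Set K) := fun x hx => hcon x hx
  have h2 := Set.ncard_le_ncard this (Set.toFinite _)
  rw [Set.ncard_coe_finset] at h2
  have h3 : Nat.card F = (F : Set K).ncard := rfl
  omega

theorem aux_sidon {K ι : Type*} [Field K] [Fintype K] [DecidableEq ι] (F : Subfield K)
    (s : Finset ι) (h : 4 ^ s.card < Nat.card F) :
    ∃ α : ι → K, (∀ i, α i ∈ F) ∧
      Set.InjOn (fun T : Finset ι => ∑ i ∈ T, α i) (s.powerset : Set (Finset ι)) := by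
  classical
  induction s using Finset.induction_on with
  | empty =>
    refine ⟨0, fun _ => F.zero_mem, ?_⟩
    simp
  | insert a s ha ih =>
    rw [Finset.card_insert_of_notMem ha, pow_succ] at h
    obtain ⟨α, hα, hinj⟩ := ih (by omega)
    let B : Finset K := (s.powerset ×ˢ s.powerset).image
      (fun P => ∑ i ∈ P.1, α i - ∑ i ∈ P.2, α i)
    have hB : B.card < Nat.card F := by
      refine lt_of_le_of_lt Finset.card_image_le ?_
      rw [Finset.card_product, Finset.card_powerset, ← mul_pow]
      rw [show 2 * 2 = 4 from rfl]
      omega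
    obtain ⟨t, htF, htB⟩ := aux_avoid F B hB
    have key : ∀ T1 ∈ s.powerset, ∀ T2 ∈ s.powerset,
        t ≠ ∑ i ∈ T1, α i - ∑ i ∈ T2, α i := by
      intro T1 h1 T2 h2 he
      exact htB (Finset.mem_image.mpr ⟨(T1, T2), Finset.mem_product.mpr ⟨h1, h2⟩, he.symm⟩)
    have hs : ∀ T ⊆ s, ∑ i ∈ T, Function.update α a t i = ∑ i ∈ T, α i := by
      intro T hT
      refine Finset.sum_congr rfl fun i hi => ?_
      rw [Function.update_of_ne]
      rintro rfl
      exact ha (hT hi)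
    have hs' : ∀ T ⊆ s, ∑ i ∈ insert a T, Function.update α a t i = t + ∑ i ∈ T, α i := by
      intro T hT
      rw [Finset.sum_insert (fun h => ha (hT h)), hs T hT, Function.update_self]
    refine ⟨Function.update α a t, ?_, ?_⟩
    · intro i
      by_cases hi : i = a
      · subst hi; simpa using htF
      · simpa [hi] using hα i
    · intro T1 h1 T2 h2 he
      rw [Finset.mem_coe, Finset.powerset_insert, Finset.mem_union, Finset.mem_image] at h1 h2
      rcases h1 with h1 | ⟨U1, h1, rfl⟩ <;> rcases h2 with h2 | ⟨U2, h2, rfl⟩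
      · simp only at he
        rw [hs _ (Finset.mem_powerset.mp h1), hs _ (Finset.mem_powerset.mp h2)] at he
        exact hinj h1 h2 he
      · simp only at he
        rw [hs _ (Finset.mem_powerset.mp h1), hs' _ (Finset.mem_powerset.mp h2)] at he
        exact absurd (by rw [he]; ring) (key T1 h1 U2 h2)
      · simp only at he
        rw [hs' _ (Finset.mem_powerset.mp h1), hs _ (Finset.mem_powerset.mp h2)] at he
        exact absurd (by rw [← he]; ring) (key T2 h2 U1 h1)
      · simp only at he
        rw [hs' _ (Finset.mem_powerset.mp h1), hs' _ (Finset.mem_powerset.mp h2)] at he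
        rw [hinj h1 h2 (add_left_cancel he)]

theorem aux_mono {K : Type*} [Field K] {n : ℕ} (f : MvPolynomial (Fin n) K) (S : Finset (Fin n))
    (h : ∑ T ∈ S.powerset, (-1 : K) ^ T.card *
      MvPolynomial.eval (fun i => if i ∈ T then (1 : K) else 0) f ≠ 0) :
    ∃ e ∈ f.support, e.support = S := by
  classical
  by_contra! hcon
  apply h
  simp only [MvPolynomial.eval_eq, Finset.mul_sum]
  rw [Finset.sum_comm]
  refine Finset.sum_eq_zero fun e he => ?_
  have hne := hcon e he
  have h1 : ∀ T ∈ S.powerset, (-1 : K) ^ T.card * (f.coeff e *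
      ∏ i ∈ e.support, (if i ∈ T then (1 : K) else 0) ^ e i) =
      f.coeff e * (if e.support ⊆ S then 1 else 0) * ((∏ _i ∈ T, (-1 : K)) *
        ∏ i ∈ S \ T, (if i ∈ e.support then (0 : K) else 1)) := by
    intro T hT
    rw [Finset.mem_powerset] at hT
    have h2 : ∏ i ∈ e.support, (if i ∈ T then (1 : K) else 0) ^ e i =
        if e.support ⊆ T then 1 else 0 := by
      split_ifs with hsub
      · exact Finset.prod_eq_one fun i hi => by simp [hsub hi]
      · obtain ⟨i, hi, hiT⟩ := Finset.not_subset.mp hsub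
        refine Finset.prod_eq_zero hi ?_
        rw [if_neg hiT, zero_pow (Finsupp.mem_support_iff.mp hi)]
    have h3 : (if e.support ⊆ S then (1 : K) else 0) *
        ∏ i ∈ S \ T, (if i ∈ e.support then (0 : K) else 1) =
        if e.support ⊆ T then 1 else 0 := by
      by_cases hsub : e.support ⊆ T
      · rw [if_pos hsub, if_pos (hsub.trans hT), one_mul]
        refine Finset.prod_eq_one fun i hi => ?_
        rw [if_neg fun h => (Finset.mem_sdiff.mp hi).2 (hsub h)]
      · rw [if_neg hsub]
        by_cases hS : e.support ⊆ S
        · obtain ⟨i, hi, hiT⟩ := Finset.not_subset.mp hsub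
          have hz : ∏ i ∈ S \ T, (if i ∈ e.support then (0 : K) else 1) = 0 :=
            Finset.prod_eq_zero (Finset.mem_sdiff.mpr ⟨hS hi, hiT⟩) (if_pos hi)
          rw [hz, mul_zero]
        · rw [if_neg hS, zero_mul]
    rw [h2, ← h3, Finset.prod_const]
    ring
  rw [Finset.sum_congr rfl h1, ← Finset.mul_sum, ← Finset.prod_add]
  by_cases hS : e.support ⊆ S
  · have : ¬ S ⊆ e.support := fun h => hne (hS.antisymm h)
    obtain ⟨i, hi, hie⟩ := Finset.not_subset.mp this
    rw [Finset.prod_eq_zero hi, mul_zero]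
    rw [if_neg hie]; ring
  · rw [if_neg hS]; ring


/-- Sparsity lower bound over positive characteristic: for `n ≥ 8`,
`p` prime, `p^k > 2^{2n}`, a finite field `F'` of size `p^{2k}` with subfield `F` of
size `p^k`, and `β ∈ F' \ F`, there is an `α ∈ F^n` so that every polynomial `f`
agreeing with `1/(∑ i, α i * x i - β)` on the Boolean cube has at least `2^{n/4 - 1}`
monomials. -/
theorem sparsity_lower_bound_positive_char
    (n : ℕ) (hn : 8 ≤ n) (p : ℕ) (hp : p.Prime) (k : ℕ)
    (hpk : 2 ^ (2 * n) < p ^ k)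
    (F' : Type*) [Field F'] [Fintype F'] (hcard : Fintype.card F' = p ^ (2 * k))
    (F : Subfield F') (hFcard : Nat.card F = p ^ k)
    (β : F') (hβ : β ∉ F) :
    ∃ α : Fin n → F', (∀ i, α i ∈ F) ∧
      ∀ f : MvPolynomial (Fin n) F',
        (∀ a : Fin n → F', (∀ i, a i = 0 ∨ a i = 1) →
          MvPolynomial.eval a f * ((∑ i, α i * a i) - β) = 1) →
        2 ^ (n / 4 - 1) ≤ f.support.card := by
  classical
  have hn0 : 0 < n := by omega
  let i0 : Fin n := ⟨0, hn0⟩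
  let s : Finset (Fin n) := Finset.univ.erase i0
  have hi0 : i0 ∉ s := Finset.notMem_erase _ _
  have hs : s.card = n - 1 := by simp [s]
  have hlt : 4 ^ s.card < Nat.card F := by
    rw [hFcard, hs]
    refine lt_of_le_of_lt ?_ hpk
    rw [pow_mul]
    exact Nat.pow_le_pow_right (by norm_num) (by omega)
  obtain ⟨α, hα, hinj⟩ := aux_sidon F s hlt
  have hroots : ∀ S : Finset (Fin n), ∃ B : Finset F', S ⊆ s → (B.card ≤ 2 ^ (n - 1) ∧ ∀ t, t ∉ B →
      (∀ T ∈ S.powerset, t - (β - ∑ i ∈ T, α i) ≠ 0) →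
      ∑ T ∈ S.powerset, (-1 : F') ^ T.card * (t - (β - ∑ i ∈ T, α i))⁻¹ ≠
        ∑ T ∈ S.powerset, (-1 : F') ^ T.card * (∑ i ∈ T, α i - β)⁻¹) := by
    intro S
    by_cases hS : S ⊆ s
    · obtain ⟨B, hB, hB'⟩ := aux_roots S.powerset ⟨∅, Finset.empty_mem_powerset S⟩
        (fun T => β - ∑ i ∈ T, α i) (fun T => (-1 : F') ^ T.card)
        (by
          intro T1 h1 T2 h2 he
          have hsub := Finset.powerset_mono.mpr hS
          exact hinj (hsub h1) (hsub h2) (sub_right_injective he))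
        (fun T _ => pow_ne_zero _ (neg_ne_zero.mpr one_ne_zero))
        (∑ T ∈ S.powerset, (-1 : F') ^ T.card * (∑ i ∈ T, α i - β)⁻¹)
      refine ⟨B, fun _ => ⟨hB.trans ?_, hB'⟩⟩
      rw [Finset.card_powerset, ← hs]
      exact Nat.pow_le_pow_right (by norm_num) (Finset.card_le_card hS)
    · exact ⟨∅, fun h => absurd h hS⟩
  choose B hB using hroots
  have hcardB : (s.powerset.biUnion B).card < Nat.card F := by
    refine lt_of_le_of_lt (Finset.card_biUnion_le_card_mul _ _ (2 ^ (n - 1))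
      fun S hS => (hB S (Finset.mem_powerset.mp hS)).1) ?_
    rw [Finset.card_powerset, ← hs, ← mul_pow]
    exact hlt
  obtain ⟨t, htF, htB⟩ := aux_avoid F _ hcardB
  have hsF : ∀ T : Finset (Fin n), ∑ i ∈ T, α i ∈ F := fun T => F.sum_mem fun i _ => hα i
  have hsum : ∀ T ⊆ s, ∑ i ∈ T, Function.update α i0 t i = ∑ i ∈ T, α i := by
    intro T hT
    refine Finset.sum_congr rfl fun i hi => ?_
    rw [Function.update_of_ne]
    rintro rfl
    exact hi0 (hT hi)
  refine ⟨Function.update α i0 t, ?_, ?_⟩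
  · intro i
    by_cases hi : i = i0
    · subst hi; simpa using htF
    · simpa [hi] using hα i
  intro f hf
  have hfT : ∀ T : Finset (Fin n), MvPolynomial.eval (fun i => if i ∈ T then (1 : F') else 0) f =
      (∑ i ∈ T, Function.update α i0 t i - β)⁻¹ := by
    intro T
    have := hf (fun i => if i ∈ T then (1 : F') else 0) (fun i => by by_cases h : i ∈ T <;> simp [h])
    simp only [mul_ite, mul_one, mul_zero, Finset.sum_ite_mem, Finset.univ_inter] at this
    exact eq_inv_of_mul_eq_one_left this
  have hex : ∀ S ∈ s.powerset, ∃ e ∈ f.support, e.support = insert i0 S := by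
    intro S hS
    have hS' := Finset.mem_powerset.mp hS
    apply aux_mono
    have hiS : i0 ∉ S := fun h => hi0 (hS' h)
    rw [Finset.sum_powerset_insert hiS]
    have h1 := (hB S hS').2 t (fun h => htB (Finset.mem_biUnion.mpr ⟨S, hS, h⟩)) (by
      intro T hT h0
      apply hβ
      have : β = t + ∑ i ∈ T, α i := by linear_combination -h0
      rw [this]
      exact F.add_mem htF (hsF T))
    intro h0
    apply h1
    rw [← sub_eq_zero, ← neg_eq_zero, neg_sub, ← h0, sub_eq_add_neg, ← Finset.sum_neg_distrib]
    congr 1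
    · refine Finset.sum_congr rfl fun T hT => ?_
      rw [hfT, hsum T ((Finset.mem_powerset.mp hT).trans hS')]
    · refine Finset.sum_congr rfl fun T hT => ?_
      have hTs := (Finset.mem_powerset.mp hT).trans hS'
      have hiT : i0 ∉ T := fun h => hi0 (hTs h)
      rw [hfT, Finset.sum_insert hiT, hsum T hTs, Function.update_self,
        Finset.card_insert_of_notMem hiT, pow_succ]
      rw [show t - (β - ∑ i ∈ T, α i) = t + ∑ i ∈ T, α i - β by ring]
      ring
  have hsub : s.powerset ⊆ f.support.image (fun e => e.support.erase i0) := by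
    intro S hS
    obtain ⟨e, he, heS⟩ := hex S hS
    refine Finset.mem_image.mpr ⟨e, he, ?_⟩
    rw [heS, Finset.erase_insert fun h => hi0 (Finset.mem_powerset.mp hS h)]
  have h2 := (Finset.card_le_card hsub).trans Finset.card_image_le
  rw [Finset.card_powerset, hs] at h2
  exact (Nat.pow_le_pow_right (by norm_num) (by omega)).trans h2
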